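/- Let G be a finite group and ψ : R → S a G-Galois-Azumaya extension. Then the Galois element η_e is an invertible element of the ring S ⊗_R S (with multiplication (s ⊗ t)(s' ⊗ t') = ss' ⊗ tt'). -/

import Mathlib

open scoped TensorProduct

namespace Nuss
noncomputable section

variable {R : Type*} [CommRing R] {S : Type*} [Ring S] [Algebra R S]
variable {G : Type*} [Group G]

/-- The Galois map `Γ : S ⊗[R] S →ₗ[R] Map(G,S)`, `Γ(s ⊗ t)(g) = s⬝g(t)`, for a centralizing
extension, i.e. an `R`-algebra `S`, with `G` acting by `R`-algebra automorphisms. -/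
def gammaAlg (act : G →* (S ≃ₐ[R] S)) : S ⊗[R] S →ₗ[R] (G → S) :=
  TensorProduct.lift <| LinearMap.mk₂ R (fun s t => fun g => s * act g t)
    (fun s s' t => by funext g; simp [add_mul])
    (fun c s t => by funext g; simp [Algebra.smul_mul_assoc])
    (fun s t t' => by funext g; simp [map_add, mul_add])
    (fun c s t => by funext g; simp [map_smul, Algebra.mul_smul_comm])

@[simp] lemma gammaAlg_tmul (act : G →* (S ≃ₐ[R] S)) (s t : S) :
    gammaAlg act (s ⊗ₜ[R] t) = fun g => s * act g t := rfl

/-- The function `δ_e ∈ Map(G, S)`: `1` at the neutral element, `0` elsewhere. -/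
def deltaE' (G S : Type*) [Group G] [Ring S] : G → S :=
  fun g => letI := Classical.decEq G; if g = 1 then 1 else 0

/-- A centralizing `G`-Galois extension: `S` is an `R`-algebra (so that the structure morphism
`ψ = algebraMap R S` lands in the centre of `S`), the finite group `G` acts on `S` by
`R`-algebra automorphisms (equivalently, by ring automorphisms fixing `ψ(R)` pointwise),
`S` is a faithfully flat `R`-module via `ψ`, and the Galois map is bijective. -/
structure IsCentralizingGaloisExtension (G : Type*) [Group G] [Finite G]
    (R S : Type*) [CommRing R] [Ring S] [Algebra R S] (act : G →* (S ≃ₐ[R] S)) : Prop where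
  faithfullyFlat : Module.FaithfullyFlat R S
  bijective : Function.Bijective (gammaAlg act)

/-- A central extension: the structure morphism maps `R` bijectively onto the centre of `S`. -/
def IsCentralExtension (R S : Type*) [CommRing R] [Ring S] [Algebra R S] : Prop :=
  Function.Injective (algebraMap R S) ∧ (algebraMap R S).range = Subring.center S

/-- A separable extension: the multiplication `μ : S ⊗[R] S → S` splits as a morphism of
`S`-bimodules; equivalently there is a Casimir element `η` with `μ(η) = 1`. -/
def IsSeparableExtension (R S : Type*) [CommRing R] [Ring S] [Algebra R S] : Prop :=
  ∃ η : S ⊗[R] S, (∀ s : S, (s ⊗ₜ[R] (1 : S)) * η = η * ((1 : S) ⊗ₜ[R] s)) ∧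
    LinearMap.mul' R S η = 1

/-- A `G`-Galois-Azumaya extension: a central `G`-Galois extension `R → S` such that `S` is
an Azumaya (central separable) `R`-algebra. -/
def IsGaloisAzumayaExtension (G : Type*) [Group G] [Finite G]
    (R S : Type*) [CommRing R] [Ring S] [Algebra R S] (act : G →* (S ≃ₐ[R] S)) : Prop :=
  IsCentralizingGaloisExtension G R S act ∧ IsCentralExtension R S ∧ IsSeparableExtension R S

end
end Nuss

namespace Nuss
noncomputable section

/-!
The inverse of the Galois element `η = ∑ xⱼ ⊗ yⱼ` is `|G| ∑ yⱼ ⊗ xⱼ`. As `η` is a Casimir element,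
`s ↦ ∑ xⱼ * s * yⱼ` has values in the centre, which is `R`. It is also invariant under `G` and
fixes the centre, so that `|G| ∑ xⱼ * s * yⱼ` is the trace `∑ g, g s`. The Galois condition
`∑ xⱼ * g yⱼ = δ_e g` says that `∑ xⱼ * tr (yⱼ * s) = s`; substituting the formula for the trace,
this says that `η * |G| ∑ yⱼ ⊗ xⱼ` and `1 ⊗ 1` act on `S` in the same way, where `a ⊗ b` acts by
`s ↦ a * s * b`. By the same dual basis property this action is faithful, so the two agree. The
swap of factors is a ring automorphism of `S ⊗[R] S`, which makes the inverse two-sided.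
-/

section Sandwich

variable {R : Type*} [CommRing R] {S : Type*} [Ring S] [Algebra R S]

variable (R S) in
/-- The sandwich action of `S ⊗[R] S` on `S`, in which `a ⊗ b` acts by `s ↦ a * s * b`. It is a
linear map only: for the componentwise product on `S ⊗[R] S` it is not multiplicative, since
composition of sandwiches multiplies the second factors in the opposite order. -/
def sandwich : S ⊗[R] S →ₗ[R] Module.End R S :=
  TensorProduct.lift <|
    (LinearMap.mul R (Module.End R S)).compl₁₂ (LinearMap.mul R S) (LinearMap.mul R S).flip

@[simp]
lemma sandwich_tmul (a b s : S) : sandwich R S (a ⊗ₜ[R] b) s = a * s * b :=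
  (mul_assoc a s b).symm

lemma sandwich_tmul_one_mul (a : S) (w : S ⊗[R] S) (s : S) :
    sandwich R S ((a ⊗ₜ[R] (1 : S)) * w) s = a * sandwich R S w s := by
  induction w with
  | zero => simp
  | tmul x y => simp [mul_assoc]
  | add v w hv hw => simp [mul_add, hv, hw]

lemma sandwich_mul_tmul (w : S ⊗[R] S) (a b s : S) :
    sandwich R S (w * (a ⊗ₜ[R] b)) s = sandwich R S w (a * s) * b := by
  induction w with
  | zero => simp
  | tmul x y => simp [mul_assoc]
  | add v w hv hw => simp [add_mul, hv, hw]

lemma sandwich_map (f : S →ₐ[R] S) (w : S ⊗[R] S) (s : S) :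
    sandwich R S (Algebra.TensorProduct.map f f w) (f s) = f (sandwich R S w s) := by
  induction w with
  | zero => simp
  | tmul x y => simp
  | add v w hv hw => simp [hv, hw]

/-- A Casimir element: an element of `S ⊗[R] S` that commutes with the outer `S`-bimodule
structure. -/
def IsCasimir (η : S ⊗[R] S) : Prop :=
  ∀ s : S, (s ⊗ₜ[R] (1 : S)) * η = η * ((1 : S) ⊗ₜ[R] s)

namespace IsCasimir

variable {η : S ⊗[R] S}

lemma sandwich_mem_center (hη : IsCasimir η) (s : S) :
    sandwich R S η s ∈ Subring.center S := by
  refine Subring.mem_center_iff.mpr fun u => ?_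
  rw [← sandwich_tmul_one_mul, hη u, sandwich_mul_tmul, one_mul]

lemma tmul_sandwich_mul (hη : IsCasimir η)
    (hcen : Subring.center S ≤ (algebraMap R S).range) (a s t : S) :
    a ⊗ₜ[R] (sandwich R S η s * t) = (a * sandwich R S η s) ⊗ₜ[R] t := by
  obtain ⟨c, hc⟩ := hcen (hη.sandwich_mem_center s)
  rw [← hc, ← Algebra.smul_def, ← Algebra.commutes, ← Algebra.smul_def,
    TensorProduct.smul_tmul]

lemma eq_smul_sum_sandwich (hη : IsCasimir η)
    (hcen : Subring.center S ≤ (algebraMap R S).range) {r : R}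
    (hr : r • sandwich R S (η * Algebra.TensorProduct.comm R S S η) = 1)
    {T : Finset (S × S)} (hT : η = ∑ i ∈ T, i.1 ⊗ₜ[R] i.2) (w : S ⊗[R] S) :
    w = r • ∑ j ∈ T, (∑ i ∈ T, sandwich R S w (i.1 * j.2) * i.2) ⊗ₜ[R] j.1 := by
  induction w with
  | zero => simp
  | add v w hv hw =>
    simp only [map_add, LinearMap.add_apply, add_mul, Finset.sum_add_distrib,
      TensorProduct.add_tmul, smul_add, ← hv, ← hw]
  | tmul a b =>
    have expand (s : S) : sandwich R S η s = ∑ i ∈ T, i.1 * s * i.2 := by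
      simp [hT]
    have expand_comm : sandwich R S (η * Algebra.TensorProduct.comm R S S η) b =
        ∑ j ∈ T, sandwich R S η (j.2 * b) * j.1 := by
      have comm_eq : Algebra.TensorProduct.comm R S S η = ∑ j ∈ T, j.2 ⊗ₜ[R] j.1 := by
        simp [hT]
      simp [comm_eq, Finset.mul_sum, sandwich_mul_tmul]
    calc a ⊗ₜ[R] b
        = a ⊗ₜ[R] (r • ∑ j ∈ T, sandwich R S η (j.2 * b) * j.1) := by
          rw [← expand_comm, ← LinearMap.smul_apply, hr, Module.End.one_apply]
      _ = r • ∑ j ∈ T, (a * sandwich R S η (j.2 * b)) ⊗ₜ[R] j.1 := by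
          simp only [TensorProduct.tmul_smul, TensorProduct.tmul_sum,
            hη.tmul_sandwich_mul hcen]
      _ = r • ∑ j ∈ T, (∑ i ∈ T, sandwich R S (a ⊗ₜ[R] b) (i.1 * j.2) * i.2) ⊗ₜ[R] j.1 := by
          simp only [expand, sandwich_tmul, Finset.mul_sum, mul_assoc]

lemma sandwich_injective (hη : IsCasimir η)
    (hcen : Subring.center S ≤ (algebraMap R S).range) {r : R}
    (hr : r • sandwich R S (η * Algebra.TensorProduct.comm R S S η) = 1) :
    Function.Injective (sandwich R S) := by
  obtain ⟨T, hT⟩ := TensorProduct.exists_finset η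
  intro v w hvw
  rw [hη.eq_smul_sum_sandwich hcen hr hT v, hvw, ← hη.eq_smul_sum_sandwich hcen hr hT w]

theorem mul_smul_comm_eq_one (hη : IsCasimir η)
    (hcen : Subring.center S ≤ (algebraMap R S).range) {r : R}
    (hr : r • sandwich R S (η * Algebra.TensorProduct.comm R S S η) = 1) :
    η * r • Algebra.TensorProduct.comm R S S η = 1 := by
  apply hη.sandwich_injective hcen hr
  rw [mul_smul_comm, map_smul, hr]
  ext s
  simp [Algebra.TensorProduct.one_def]

end IsCasimir

lemma isUnit_of_mul_smul_comm_eq_one {η : S ⊗[R] S} {r : R}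
    (h : η * r • Algebra.TensorProduct.comm R S S η = 1) : IsUnit η := by
  have comm_comm : Algebra.TensorProduct.comm R S S (Algebra.TensorProduct.comm R S S η) = η :=
    (Algebra.TensorProduct.comm R S S).symm_apply_apply η
  have left_inv : r • Algebra.TensorProduct.comm R S S η * η = 1 := by
    simpa [comm_comm] using congrArg (Algebra.TensorProduct.comm R S S) h
  exact ⟨⟨η, _, h, left_inv⟩, rfl⟩

end Sandwich

section GaloisMap

variable {R : Type*} [CommRing R] {S : Type*} [Ring S] [Algebra R S]
variable {G : Type*} [Group G] (act : G →* (S ≃ₐ[R] S))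

lemma gammaAlg_tmul_one_mul (s : S) (w : S ⊗[R] S) (g : G) :
    gammaAlg act ((s ⊗ₜ[R] (1 : S)) * w) g = s * gammaAlg act w g := by
  induction w with
  | zero => simp
  | tmul a b => simp [mul_assoc]
  | add v w hv hw => simp [mul_add, hv, hw]

lemma gammaAlg_mul_one_tmul (w : S ⊗[R] S) (s : S) (g : G) :
    gammaAlg act (w * ((1 : S) ⊗ₜ[R] s)) g = gammaAlg act w g * act g s := by
  induction w with
  | zero => simp
  | tmul a b => simp [mul_assoc]
  | add v w hv hw => simp [add_mul, hv, hw]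

lemma gammaAlg_map (k : G) (w : S ⊗[R] S) (g : G) :
    gammaAlg act (Algebra.TensorProduct.map (act k : S →ₐ[R] S) (act k : S →ₐ[R] S) w) g =
      act k (gammaAlg act w (k⁻¹ * g * k)) := by
  induction w with
  | zero => simp
  | tmul a b => simp
  | add v w hv hw => simp [hv, hw]

lemma sandwich_apply_of_mem_center (w : S ⊗[R] S) {z : S} (hz : z ∈ Subring.center S) :
    sandwich R S w z = gammaAlg act w 1 * z := by
  induction w with
  | zero => simp
  | tmul a b => simp [mul_assoc, Subring.mem_center_iff.mp hz b]
  | add v w hv hw => simp [add_mul, hv, hw]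

lemma deltaE'_eq_single [DecidableEq G] : deltaE' G S = Pi.single 1 1 := by
  funext g
  simp only [deltaE', Pi.single_apply]
  congr

lemma act_sum_act [Fintype G] (k : G) (s : S) : act k (∑ g, act g s) = ∑ g, act g s := by
  rw [map_sum]
  exact Fintype.sum_equiv (Equiv.mulLeft k) _ _ fun g => by simp

variable {act} (hinj : Function.Injective (gammaAlg act))
include hinj

lemma mem_center_of_forall_act_eq {z : S} (hz : ∀ g, act g z = z) :
    z ∈ Subring.center S := by
  have one_tmul_eq : (1 : S) ⊗ₜ[R] z = z ⊗ₜ[R] (1 : S) := by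
    apply hinj
    funext g
    simp [hz]
  refine Subring.mem_center_iff.mpr fun s => ?_
  simpa using congrArg (fun w => gammaAlg act (w * (s ⊗ₜ[R] (1 : S))) 1) one_tmul_eq

variable {η : S ⊗[R] S} (hη : gammaAlg act η = deltaE' G S)
include hη

lemma isCasimir_galoisElement : IsCasimir η := by
  classical
  intro s
  apply hinj
  funext g
  rw [gammaAlg_tmul_one_mul, gammaAlg_mul_one_tmul, hη, deltaE'_eq_single]
  obtain rfl | hg := eq_or_ne g 1 <;> simp [*]

lemma map_act_galoisElement (k : G) :
    Algebra.TensorProduct.map (act k : S →ₐ[R] S) (act k : S →ₐ[R] S) η = η := by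
  classical
  apply hinj
  funext g
  rw [gammaAlg_map, hη, deltaE'_eq_single]
  have conj_eq_one : k⁻¹ * g * k = 1 ↔ g = 1 := by
    simpa using conj_eq_one_iff (a := k⁻¹) (b := g)
  simp only [Pi.single_apply, conj_eq_one, apply_ite (act k), map_one, map_zero]

variable (hcen : Subring.center S ≤ (algebraMap R S).range)
include hcen

lemma sandwich_galoisElement_act (k : G) (s : S) :
    sandwich R S η (act k s) = sandwich R S η s := by
  obtain ⟨c, hc⟩ := hcen ((isCasimir_galoisElement hinj hη).sandwich_mem_center s)
  have equivariant := sandwich_map (act k : S →ₐ[R] S) η s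
  rw [map_act_galoisElement hinj hη] at equivariant
  simpa [← hc] using equivariant

variable [Fintype G]

lemma sum_act_eq_card_smul_sandwich (s : S) :
    ∑ g, act g s = (Fintype.card G : R) • sandwich R S η s := by
  classical
  have trace_mem_center := mem_center_of_forall_act_eq hinj fun k => act_sum_act act k s
  calc ∑ g, act g s
      = sandwich R S η (∑ g, act g s) := by
        simp [sandwich_apply_of_mem_center act η trace_mem_center, hη, deltaE'_eq_single]
    _ = (Fintype.card G : R) • sandwich R S η s := by
        simp [sandwich_galoisElement_act hinj hη hcen, Nat.cast_smul_eq_nsmul]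

lemma card_smul_sandwich_galoisElement_mul_comm (w : S ⊗[R] S) (s : S) :
    (Fintype.card G : R) • sandwich R S (η * Algebra.TensorProduct.comm R S S w) s =
      ∑ g, gammaAlg act w g * act g s := by
  induction w with
  | zero => simp
  | add v w hv hw => simp [mul_add, add_mul, Finset.sum_add_distrib, hv, hw]
  | tmul a b =>
    have trace_mem_center := mem_center_of_forall_act_eq hinj fun k => act_sum_act act k (b * s)
    rw [Algebra.TensorProduct.comm_tmul, sandwich_mul_tmul, ← smul_mul_assoc,
      ← sum_act_eq_card_smul_sandwich hinj hη hcen, ← Subring.mem_center_iff.mp trace_mem_center]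
    simp [Finset.mul_sum, mul_assoc]

lemma card_smul_sandwich_galoisElement_mul_comm_self :
    (Fintype.card G : R) • sandwich R S (η * Algebra.TensorProduct.comm R S S η) = 1 := by
  classical
  ext s
  rw [LinearMap.smul_apply, card_smul_sandwich_galoisElement_mul_comm hinj hη hcen, hη,
    deltaE'_eq_single, Fintype.sum_eq_single 1 fun g hg => by simp [hg]]
  simp

end GaloisMap

theorem galoisElement_isUnit_general
    {R : Type*} [CommRing R] {S : Type*} [Ring S] [Algebra R S]
    {G : Type*} [Group G] [Finite G] {act : G →* (S ≃ₐ[R] S)}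
    (hinj : Function.Injective (gammaAlg act))
    (hcen : Subring.center S ≤ (algebraMap R S).range)
    {η : S ⊗[R] S} (hη : gammaAlg act η = deltaE' G S) :
    IsUnit η := by
  have := Fintype.ofFinite G
  have casimir := isCasimir_galoisElement hinj hη
  have acts_as_one := card_smul_sandwich_galoisElement_mul_comm_self hinj hη hcen
  exact isUnit_of_mul_smul_comm_eq_one (casimir.mul_smul_comm_eq_one hcen acts_as_one)

/-- For a `G`-Galois-Azumaya extension `ψ : R → S`, the Galois element
`η_e = Γ⁻¹(δ_e)` is an invertible element of the ring `S ⊗_R S` (with multiplication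
`(s ⊗ t)(s' ⊗ t') = ss' ⊗ tt'`). -/
theorem galoisElement_isUnit
    {R : Type*} [CommRing R] {S : Type*} [Ring S] [Algebra R S]
    {G : Type*} [Group G] [Finite G]
    (act : G →* (S ≃ₐ[R] S))
    (hGA : IsGaloisAzumayaExtension G R S act)
    (η : S ⊗[R] S) (hη : gammaAlg act η = deltaE' G S) :
    IsUnit η :=
  galoisElement_isUnit_general hGA.1.bijective.injective hGA.2.1.2.ge hη

end
end Nuss
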